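/- Let k ≥ 2 be a fixed integer and α > β > 0 fixed constants. For r = 0, 1, …, k−1 set c_r = 2(k−1−2r), and let Y_r ∼ Bin(N_r, p_r) be independent with N_r = (1+o(1)) (1/2^{k−1}) C(k−1, r) C(n, k−1), p_0 = α log n / C(n, k−1) (1+o(1)) and p_r = β log n / C(n, k−1) (1+o(1)) for 1 ≤ r ≤ k−1. Set X = ∑_{r=0}^{k−1} c_r Y_r. Then Pr(X ≤ −2 log n / log log n) = exp(−(1+o(1)) I_2(α,β) log n), where I_2(α,β) = max_{t ≥ 0} (1/2^{k−1})[α(1 − e^{−(k−1)t}) + β ∑_{a=1}^{k−1} C(k−1,a)(1 − e^{−(k−1−2a)t})]. -/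

import Mathlib

/-!
For `t ≥ 0`, Chernoff's bound `Pr(X ≤ x) ≤ exp(t x) E[exp(-t X)]` together with
`1 - p + p s ≤ exp(-p (1 - s))` bounds the tail by its Poisson analogue. With means asymptotic to
`w i log n` and `x = o(log n)` this gives `exp(-(Λ(t) - o(1)) log n)`, where
`Λ(t) = ∑ i, w i (1 - exp(-c i t))`.

The best `t` is interior: `Λ'(0) = ∑ i, w i c i` is positive because `β < α`, and `Λ → -∞` because
some `c i` is negative. Hence `Λ'(t) = ∑ i, w i c i exp(-c i t)` vanishes there, which says that the
tilted means `w i exp(-c i t) log n` lie on the hyperplane `∑ i, c i y i = 0`. Some lattice point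
within `o(log n)` of them satisfies the constraint, and by Stirling's formula this single point
already has probability `exp(-(Λ(t) + o(1)) log n)`.
-/

open Finset Filter

open scoped Classical

/-- The binomial probability mass function: `Pr(Bin(N,p) = y)`. -/
noncomputable def binomPMF (N : ℕ) (p : ℝ) (y : ℕ) : ℝ :=
  (N.choose y : ℝ) * p ^ y * (1 - p) ^ (N - y)

open Asymptotics
open scoped Topology

section Limits

variable {κ : Type*} {l : Filter κ} {L : κ → ℝ}

lemma isEquivalent_of_eq_one_add_mul {u v e : κ → ℝ} (he : Tendsto e l (𝓝 0))
    (h : ∀ n, u n = (1 + e n) * v n) : u ~[l] v :=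
  isEquivalent_iff_exists_eq_mul.2 ⟨fun n => 1 + e n, by simpa using he.const_add 1, .of_forall h⟩

lemma tendsto_natCeil_div {u : κ → ℝ} {θ : ℝ} (hθ : 0 ≤ θ) (hL : Tendsto L l atTop)
    (hu : Tendsto (fun n => u n / L n) l (𝓝 θ)) :
    Tendsto (fun n => (⌈u n⌉₊ : ℝ) / L n) l (𝓝 θ) := by
  have hLinv : Tendsto (fun n => (L n)⁻¹) l (𝓝 0) := tendsto_inv_atTop_zero.comp hL
  have hupper : Tendsto (fun n => |u n / L n| + (L n)⁻¹) l (𝓝 θ) := by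
    simpa [abs_of_nonneg hθ] using hu.abs.add hLinv
  refine tendsto_of_tendsto_of_tendsto_of_le_of_le' hu hupper ?_ ?_ <;>
    filter_upwards [hL.eventually_gt_atTop 0] with n hLn
  · gcongr
    exact Nat.le_ceil _
  · have hceil : (⌈u n⌉₊ : ℝ) ≤ |u n| + 1 :=
      (Nat.cast_le.2 (Nat.ceil_mono (le_abs_self _))).trans
        (Nat.ceil_lt_add_one (abs_nonneg _)).le
    rw [abs_div, abs_of_pos hLn, inv_eq_one_div, ← add_div]
    gcongr

lemma mul_natCeil_le (c : ℝ) {u : ℝ} (hu : 0 ≤ u) : c * (⌈u⌉₊ : ℝ) ≤ c * u + |c| := by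
  have hle : |(⌈u⌉₊ : ℝ) - u| ≤ 1 := by
    rw [abs_of_nonneg (sub_nonneg.2 (Nat.le_ceil _))]
    linarith [Nat.ceil_lt_add_one hu]
  calc c * (⌈u⌉₊ : ℝ) = c * u + c * ((⌈u⌉₊ : ℝ) - u) := by ring
    _ ≤ c * u + |c| * |(⌈u⌉₊ : ℝ) - u| := by
        rw [← abs_mul]
        gcongr
        exact le_abs_self _
    _ ≤ c * u + |c| := by
        gcongr
        exact mul_le_of_le_one_right (abs_nonneg c) hle

lemma tendsto_log_factorial_sub_div :
    Tendsto (fun y : ℕ => (Real.log y.factorial - (y * Real.log y - y)) / y) atTop (𝓝 0) := by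
  have hstirling : Tendsto (fun y : ℕ => Real.log (Stirling.stirlingSeq y) / y) atTop (𝓝 0) :=
    (Stirling.tendsto_stirlingSeq_sqrt_pi.log (by positivity)).div_atTop
      tendsto_natCast_atTop_atTop
  have hlog : Tendsto (fun y : ℕ => Real.log (2 * y) / y) atTop (𝓝 0) := by
    have h := (Real.isLittleO_log_id_atTop.tendsto_div_nhds_zero.comp
      (tendsto_natCast_atTop_atTop.const_mul_atTop (two_pos (α := ℝ)))).const_mul 2
    rw [mul_zero] at h
    refine h.congr fun y => ?_
    simp only [Function.comp, id]
    ring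
  have h := hstirling.add (hlog.const_mul (1 / 2))
  rw [mul_zero, add_zero] at h
  refine h.congr' ?_
  filter_upwards [eventually_gt_atTop 0] with y hy
  have hy0 : (y : ℝ) ≠ 0 := by positivity
  rw [Stirling.log_stirlingSeq_formula, Real.log_div hy0 (Real.exp_ne_zero 1), Real.log_exp]
  ring

lemma tendsto_log_pow_div_factorial_div {a : κ → ℝ} {y : κ → ℕ} {w θ : ℝ} (hw : 0 < w)
    (hθ : 0 < θ) (hL : Tendsto L l atTop) (ha : Tendsto (fun n => a n / L n) l (𝓝 w))
    (hy : Tendsto (fun n => (y n : ℝ) / L n) l (𝓝 θ)) :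
    Tendsto (fun n => Real.log (a n ^ y n / (y n).factorial) / L n) l
      (𝓝 (θ - θ * Real.log (θ / w))) := by
  have hLpos : ∀ᶠ n in l, 0 < L n := hL.eventually_gt_atTop 0
  have hytop : Tendsto y l atTop := by
    refine tendsto_natCast_atTop_iff.1 ((hy.pos_mul_atTop hθ hL).congr' ?_)
    filter_upwards [hLpos] with n hn using div_mul_cancel₀ _ hn.ne'
  have h := hy.sub ((hy.mul ((hy.div ha hw.ne').log (div_pos hθ hw).ne')).add
    (hy.mul (tendsto_log_factorial_sub_div.comp hytop)))
  rw [mul_zero, add_zero] at h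
  refine h.congr' ?_
  filter_upwards [hLpos, hytop.eventually_gt_atTop 0, ha.eventually_const_lt hw] with n hn hyn han
  have hy0 : (0 : ℝ) < y n := Nat.cast_pos.2 hyn
  have ha0 : 0 < a n := (div_pos_iff_of_pos_right hn).1 han
  simp only [Pi.div_apply, Function.comp]
  rw [div_div_div_cancel_right₀ hn.ne', Real.log_div hy0.ne' ha0.ne',
    Real.log_div (by positivity) (by positivity), Real.log_pow]
  field_simp
  ring

lemma exists_tendsto_zero_eq_exp_neg {P : κ → ℝ} {I : ℝ} (hI : I ≠ 0)
    (hL : ∀ᶠ n in l, 0 < L n)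
    (hlower : ∀ ε > 0, ∀ᶠ n in l, Real.exp (-((I + ε) * L n)) ≤ P n)
    (hupper : ∀ ε > 0, ∀ᶠ n in l, P n ≤ Real.exp (-((I - ε) * L n))) :
    ∃ ε : κ → ℝ, Tendsto ε l (𝓝 0) ∧
      ∀ᶠ n in l, P n = Real.exp (-((1 + ε n) * (I * L n))) := by
  have hPpos : ∀ᶠ n in l, 0 < P n :=
    (hlower 1 one_pos).mono fun n h => (Real.exp_pos _).trans_le h
  have hrate : Tendsto (fun n => -Real.log (P n) / L n) l (𝓝 I) := by
    refine tendsto_order.2 ⟨fun a ha => ?_, fun b hb => ?_⟩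
    · filter_upwards [hupper ((I - a) / 2) (by linarith), hPpos, hL] with n h hP hn
      have := (Real.log_le_iff_le_exp hP).2 h
      rw [lt_div_iff₀ hn]
      nlinarith
    · filter_upwards [hlower ((b - I) / 2) (by linarith), hPpos, hL] with n h hP hn
      have := (Real.le_log_iff_exp_le hP).2 h
      rw [div_lt_iff₀ hn]
      nlinarith
  refine ⟨fun n => -Real.log (P n) / L n / I - 1, ?_, ?_⟩
  · simpa [hI] using (hrate.div_const I).sub_const 1
  · filter_upwards [hPpos, hL] with n hP hn
    rw [add_sub_cancel, ← mul_assoc, div_mul_cancel₀ _ hI, div_mul_cancel₀ _ hn.ne', neg_neg,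
      Real.exp_log hP]

end Limits

section Binomial

lemma binomPMF_nonneg {N : ℕ} {p : ℝ} (hp0 : 0 ≤ p) (hp1 : p ≤ 1) (y : ℕ) :
    0 ≤ binomPMF N p y :=
  mul_nonneg (by positivity) (pow_nonneg (sub_nonneg.2 hp1) _)

lemma sum_binomPMF_mul_pow (N : ℕ) (p s : ℝ) :
    ∑ y : Fin (N + 1), binomPMF N p y * s ^ (y : ℕ) = (p * s + (1 - p)) ^ N := by
  rw [Fin.sum_univ_eq_sum_range (fun y => binomPMF N p y * s ^ y), add_pow]
  refine sum_congr rfl fun y _ => ?_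
  rw [binomPMF, mul_pow]
  ring

lemma sum_binomPMF_mul_pow_le_exp (N : ℕ) {p s : ℝ} (hp0 : 0 ≤ p) (hp1 : p ≤ 1) (hs : 0 ≤ s) :
    ∑ y : Fin (N + 1), binomPMF N p y * s ^ (y : ℕ) ≤ Real.exp (-(N * p * (1 - s))) := by
  have hbase : p * s + (1 - p) ≤ Real.exp (p * (s - 1)) := by
    linarith [Real.add_one_le_exp (p * (s - 1))]
  calc ∑ y : Fin (N + 1), binomPMF N p y * s ^ (y : ℕ)
      = (p * s + (1 - p)) ^ N := sum_binomPMF_mul_pow N p s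
    _ ≤ Real.exp (p * (s - 1)) ^ N :=
        pow_le_pow_left₀ (add_nonneg (mul_nonneg hp0 hs) (sub_nonneg.2 hp1)) hbase N
    _ = Real.exp (-(N * p * (1 - s))) := by
        rw [← Real.exp_nat_mul]
        ring_nf

lemma exp_neg_mul_div_one_sub_le_one_sub_pow (N : ℕ) {p : ℝ} (hp : p < 1) :
    Real.exp (-(N * p / (1 - p))) ≤ (1 - p) ^ N := by
  have h1p : 0 < 1 - p := sub_pos.2 hp
  have hbase : Real.exp (-(p / (1 - p))) ≤ 1 - p := by
    rw [← Real.le_log_iff_exp_le h1p]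
    convert Real.one_sub_inv_le_log_of_pos h1p using 1
    field_simp
    ring
  calc Real.exp (-(N * p / (1 - p))) = Real.exp (-(p / (1 - p))) ^ N := by
        rw [← Real.exp_nat_mul]
        ring_nf
    _ ≤ (1 - p) ^ N := pow_le_pow_left₀ (Real.exp_pos _).le hbase N

lemma pow_div_factorial_mul_exp_le_binomPMF {N y : ℕ} {p : ℝ} (hp0 : 0 ≤ p) (hp1 : p < 1)
    (hy : y ≤ N) :
    (((N : ℝ) + 1 - y) * p) ^ y / y.factorial * Real.exp (-(N * p / (1 - p))) ≤
      binomPMF N p y := by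
  have h1p : 0 ≤ 1 - p := sub_nonneg.2 hp1.le
  have hchoose : ((N : ℝ) + 1 - y) ^ y / y.factorial ≤ N.choose y := by
    have h := Nat.pow_le_choose (α := ℝ) y N
    rwa [Nat.cast_sub (by omega), Nat.cast_add_one] at h
  rw [binomPMF, mul_pow, mul_div_right_comm]
  gcongr
  exact (exp_neg_mul_div_one_sub_le_one_sub_pow N hp1).trans
    (pow_le_pow_of_le_one h1p (by linarith) (Nat.sub_le N y))

/-- The Poisson large deviation rate function: `Pr(Poisson(w L) = θ L) = exp(-(1+o(1)) L I)` with
`I = poissonRate w θ`. -/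
noncomputable def poissonRate (w θ : ℝ) : ℝ :=
  θ * Real.log (θ / w) - θ + w

lemma eventually_exp_le_binomPMF {κ : Type*} {l : Filter κ} {L p : κ → ℝ} {N y : κ → ℕ}
    {w θ ε : ℝ} (hL : Tendsto L l atTop) (hw : 0 < w) (hθ : 0 < θ) (hε : 0 < ε)
    (hp0 : ∀ᶠ n in l, 0 < p n) (hp : Tendsto p l (𝓝 0))
    (hNp : Tendsto (fun n => N n * p n / L n) l (𝓝 w))
    (hy : Tendsto (fun n => (y n : ℝ) / L n) l (𝓝 θ)) :
    ∀ᶠ n in l, y n ≤ N n ∧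
      Real.exp (-((poissonRate w θ + ε) * L n)) ≤ binomPMF (N n) (p n) (y n) := by
  have hLpos : ∀ᶠ n in l, 0 < L n := hL.eventually_gt_atTop 0
  have hyp : Tendsto (fun n => (y n : ℝ) * p n / L n) l (𝓝 0) := by
    simpa [div_mul_eq_mul_div] using hy.mul hp
  have ha : Tendsto (fun n => ((N n : ℝ) + 1 - y n) * p n / L n) l (𝓝 w) := by
    have h := (hNp.add (hp.div_atTop hL)).sub hyp
    rw [add_zero, sub_zero] at h
    exact h.congr fun n => by ring
  have hrate := (tendsto_log_pow_div_factorial_div hw hθ hL ha hy).sub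
    (hNp.div (hp.const_sub 1) (by norm_num))
  rw [show θ - θ * Real.log (θ / w) - w / (1 - 0) = -poissonRate w θ by
    rw [poissonRate]; ring] at hrate
  filter_upwards [hLpos, hp0, hp.eventually_lt_const one_pos, hyp.eventually_lt hNp hw,
    ha.eventually_const_lt hw, hrate.eventually_const_lt (show -(poissonRate w θ + ε) < _ by
      linarith)] with n hLn hpn hp1 hyNp han hrate
  have hyN : y n ≤ N n := by
    rw [div_lt_div_iff_of_pos_right hLn, mul_lt_mul_iff_left₀ hpn, Nat.cast_lt] at hyNp
    exact hyNp.le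
  have ha0 : 0 < ((N n : ℝ) + 1 - y n) * p n := (div_pos_iff_of_pos_right hLn).1 han
  refine ⟨hyN, le_trans ?_ (pow_div_factorial_mul_exp_le_binomPMF hpn.le hp1 hyN)⟩
  rw [← Real.exp_log (show 0 < (((N n : ℝ) + 1 - y n) * p n) ^ y n / (y n).factorial by
    positivity), ← Real.exp_add, Real.exp_le_exp]
  rw [Pi.div_apply, div_right_comm, ← sub_div, lt_div_iff₀ hLn] at hrate
  linarith

end Binomial

lemma exists_isMaxOn_Ici_of_deriv_pos {f f' : ℝ → ℝ} {a : ℝ}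
    (hf : ∀ x, a ≤ x → HasDerivAt f (f' x) x) (hf'a : 0 < f' a) (hlim : Tendsto f atTop atBot) :
    ∃ t, a < t ∧ f a < f t ∧ f' t = 0 ∧ IsMaxOn f (Set.Ici a) t := by
  obtain ⟨t, hat, hmax⟩ := ContinuousOn.exists_isMaxOn'
    (s := Set.Ici a) (fun x hx => (hf x hx).continuousAt.continuousWithinAt) isClosed_Ici
    Set.self_mem_Ici (by
      rw [cocompact_eq_atBot_atTop, inf_sup_right, (disjoint_atBot_principal_Ici a).eq_bot,
        bot_sup_eq]
      exact (hlim.eventually_le_atBot (f a)).filter_mono inf_le_left)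
  obtain ⟨s, hs, has⟩ : ∃ s, f a < f s ∧ a < s := by
    have hslope := (hasDerivAt_iff_tendsto_slope.1 (hf a le_rfl)).mono_left
      (nhdsGT_le_nhdsNE a)
    obtain ⟨s, hs, has⟩ := ((hslope.eventually_const_lt hf'a).and self_mem_nhdsWithin).exists
    exact ⟨s, (slope_pos_iff_of_le (le_of_lt has)).1 hs, has⟩
  have hft : f a < f t := hs.trans_le (hmax has.le)
  have hat' : a < t := lt_of_le_of_ne hat fun h => hft.ne (h ▸ rfl)
  exact ⟨t, hat', hft, (hmax.isLocalMax (Ici_mem_nhds hat')).hasDerivAt_eq_zero (hf t hat), hmax⟩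

section PoissonExponent

variable {ι : Type*} [Fintype ι]

/-- The Chernoff exponent `-log E[exp(-t * ∑ i, c i * Z i)]` for independent `Z i ∼ Poisson(w i)`,
the limits of the binomial variables. -/
noncomputable def poissonExponent (w c : ι → ℝ) (t : ℝ) : ℝ :=
  ∑ i, w i * (1 - Real.exp (-(c i * t)))

lemma hasDerivAt_poissonExponent (w c : ι → ℝ) (t : ℝ) :
    HasDerivAt (poissonExponent w c) (∑ i, w i * c i * Real.exp (-(c i * t))) t := by
  refine HasDerivAt.fun_sum fun i _ => ?_
  have h : HasDerivAt (fun t => -(c i * t)) (-(c i)) t := by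
    simpa using ((hasDerivAt_id t).const_mul (c i)).fun_neg
  exact ((h.exp.const_sub 1).const_mul (w i)).congr_deriv (by ring)

lemma tendsto_poissonExponent_atBot {w c : ι → ℝ} (hw : ∀ i, 0 ≤ w i) {i₀ : ι} (hw₀ : 0 < w i₀)
    (hc₀ : c i₀ < 0) : Tendsto (poissonExponent w c) atTop atBot := by
  have hbound (t : ℝ) :
      poissonExponent w c t ≤ ∑ i, w i + -(w i₀ * Real.exp (-(c i₀ * t))) := by
    have h := single_le_sum (f := fun i => w i * Real.exp (-(c i * t)))
      (fun i _ => mul_nonneg (hw i) (Real.exp_pos _).le) (mem_univ i₀)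
    simp only [poissonExponent, mul_sub, mul_one, sum_sub_distrib]
    linarith
  have hexp : Tendsto (fun t => Real.exp (-(c i₀ * t))) atTop atTop :=
    Real.tendsto_exp_atTop.comp
      (tendsto_neg_atBot_atTop.comp (tendsto_id.const_mul_atTop_of_neg hc₀))
  exact tendsto_atBot_mono hbound (tendsto_atBot_add_const_left _ _
    (tendsto_neg_atTop_atBot.comp (hexp.const_mul_atTop hw₀)))

lemma sum_poissonRate_tilt {w : ι → ℝ} (hw : ∀ i, w i ≠ 0) (c : ι → ℝ) (t : ℝ) :
    ∑ i, poissonRate (w i) (w i * Real.exp (-(c i * t))) =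
      poissonExponent w c t - t * ∑ i, w i * c i * Real.exp (-(c i * t)) := by
  rw [poissonExponent, mul_sum, ← sum_sub_distrib]
  refine sum_congr rfl fun i _ => ?_
  rw [poissonRate, mul_div_cancel_left₀ _ (hw i), Real.log_exp]
  ring

lemma exists_nat_tendsto_div_of_sum_le_zero {κ : Type*} {l : Filter κ} {L x : κ → ℝ} {c θ : ι → ℝ}
    (hL : Tendsto L l atTop)
    (hx : Tendsto (fun n => x n / L n) l (𝓝 0)) (hθ : ∀ i, 0 < θ i)
    (hcθ : ∑ i, c i * θ i ≤ 0) {i₀ : ι} (hc₀ : c i₀ < 0) :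
    ∃ y : κ → ι → ℕ, (∀ i, Tendsto (fun n => (y n i : ℝ) / L n) l (𝓝 (θ i))) ∧
      ∀ᶠ n in l, ∑ i, c i * (y n i : ℝ) ≤ x n := by
  -- Raising coordinate `i₀` by the `o(L)` amount below absorbs both `x` and the rounding errors.
  let shift (n : κ) : ℝ := (x n - ∑ i, |c i|) / c i₀
  let u (n : κ) (i : ι) : ℝ := θ i * L n + if i = i₀ then shift n else 0
  have hLpos : ∀ᶠ n in l, 0 < L n := hL.eventually_gt_atTop 0
  have hshift : Tendsto (fun n => shift n / L n) l (𝓝 0) := by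
    have h := (hx.sub ((tendsto_const_nhds (x := ∑ i, |c i|)).div_atTop hL)).div_const (c i₀)
    rw [sub_zero, zero_div] at h
    exact h.congr fun n => by rw [← sub_div, div_right_comm]
  have hu (i : ι) : Tendsto (fun n => u n i / L n) l (𝓝 (θ i)) := by
    have h : Tendsto (fun n => θ i + if i = i₀ then shift n / L n else 0) l (𝓝 (θ i)) := by
      split_ifs
      · simpa using hshift.const_add (θ i)
      · simpa using tendsto_const_nhds
    refine h.congr' ?_
    filter_upwards [hLpos] with n hn
    simp only [u]
    split_ifs
    · rw [add_div, mul_div_cancel_right₀ _ hn.ne']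
    · rw [add_zero, add_zero, mul_div_cancel_right₀ _ hn.ne']
  have hupos : ∀ᶠ n in l, ∀ i, 0 ≤ u n i := by
    refine eventually_all.2 fun i => ?_
    filter_upwards [(hu i).eventually_const_lt (hθ i), hLpos] with n h hn
    exact ((div_pos_iff_of_pos_right hn).1 h).le
  refine ⟨fun n i => ⌈u n i⌉₊, fun i => tendsto_natCeil_div (hθ i).le hL (hu i), ?_⟩
  filter_upwards [hupos, hLpos] with n hun hn
  have hsum : ∑ i, c i * u n i = (∑ i, c i * θ i) * L n + (x n - ∑ i, |c i|) := by
    simp only [u, shift, mul_add, sum_add_distrib, mul_ite, mul_zero, sum_ite_eq', mem_univ,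
      if_true, mul_div_cancel₀ _ hc₀.ne, sum_mul, mul_assoc]
  calc ∑ i, c i * (⌈u n i⌉₊ : ℝ) ≤ ∑ i, (c i * u n i + |c i|) :=
        sum_le_sum fun i _ => mul_natCeil_le (c i) (hun i)
    _ = (∑ i, c i * θ i) * L n + x n := by
        rw [sum_add_distrib, hsum]
        ring
    _ ≤ x n := by
        linarith [mul_nonpos_of_nonpos_of_nonneg hcθ hn.le]

end PoissonExponent

section LowerTail

variable {ι : Type*} [Fintype ι] [DecidableEq ι]

/-- The probability `Pr(∑ i, c i * Y i ≤ x)` for independent `Y i ∼ Bin(N i, p i)`, written as a sum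
over the finite product of the supports. -/
noncomputable def binomLowerTail (N : ι → ℕ) (p c : ι → ℝ) (x : ℝ) : ℝ :=
  ∑ y : (i : ι) → Fin (N i + 1),
    (∏ i, binomPMF (N i) (p i) (y i)) * (if ∑ i, c i * ((y i : ℕ) : ℝ) ≤ x then 1 else 0)

lemma binomLowerTail_const_mul (N : ι → ℕ) (p c : ι → ℝ) (x : ℝ) {a : ℝ} (ha : 0 < a) :
    binomLowerTail N p (fun i => a * c i) (a * x) = binomLowerTail N p c x := by
  simp only [binomLowerTail, mul_assoc, ← mul_sum, mul_le_mul_iff_right₀ ha]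

lemma binomLowerTail_le_exp {N : ι → ℕ} {p : ι → ℝ} (hp0 : ∀ i, 0 ≤ p i) (hp1 : ∀ i, p i ≤ 1)
    (c : ι → ℝ) (x : ℝ) {t : ℝ} (ht : 0 ≤ t) :
    binomLowerTail N p c x ≤ Real.exp (t * x - poissonExponent (fun i => N i * p i) c t) := by
  have hmarkov (y : (i : ι) → Fin (N i + 1)) :
      (if ∑ i, c i * ((y i : ℕ) : ℝ) ≤ x then (1 : ℝ) else 0) ≤
        Real.exp (t * x) * ∏ i, Real.exp (-(c i * t)) ^ (y i : ℕ) := by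
    simp only [← Real.exp_nat_mul, ← Real.exp_sum, ← Real.exp_add]
    split_ifs with h
    · refine Real.one_le_exp ?_
      have hsum : ∑ i, ((y i : ℕ) : ℝ) * -(c i * t) = -(t * ∑ i, c i * ((y i : ℕ) : ℝ)) := by
        rw [mul_sum, ← sum_neg_distrib]
        exact sum_congr rfl fun i _ => by ring
      rw [hsum, ← sub_eq_add_neg, ← mul_sub]
      exact mul_nonneg ht (sub_nonneg.2 h)
    · exact (Real.exp_pos _).le
  calc binomLowerTail N p c x
      ≤ ∑ y : (i : ι) → Fin (N i + 1), (∏ i, binomPMF (N i) (p i) (y i)) *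
          (Real.exp (t * x) * ∏ i, Real.exp (-(c i * t)) ^ (y i : ℕ)) :=
        sum_le_sum fun y _ => mul_le_mul_of_nonneg_left (hmarkov y)
          (prod_nonneg fun i _ => binomPMF_nonneg (hp0 i) (hp1 i) _)
    _ = Real.exp (t * x) * ∏ i, ∑ y : Fin (N i + 1),
          binomPMF (N i) (p i) y * Real.exp (-(c i * t)) ^ (y : ℕ) := by
        simp only [Fintype.prod_sum, mul_sum, prod_mul_distrib, mul_left_comm]
    _ ≤ Real.exp (t * x) * ∏ i, Real.exp (-(N i * p i * (1 - Real.exp (-(c i * t))))) := by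
        gcongr with i
        · exact fun i _ => sum_nonneg fun y _ =>
            mul_nonneg (binomPMF_nonneg (hp0 i) (hp1 i) _) (by positivity)
        · exact sum_binomPMF_mul_pow_le_exp _ (hp0 i) (hp1 i) (Real.exp_pos _).le
    _ = Real.exp (t * x - poissonExponent (fun i => N i * p i) c t) := by
        rw [← Real.exp_sum, ← Real.exp_add, sum_neg_distrib, ← sub_eq_add_neg, poissonExponent]

lemma prod_binomPMF_le_binomLowerTail {N y : ι → ℕ} {p c : ι → ℝ} {x : ℝ} (hp0 : ∀ i, 0 ≤ p i)
    (hp1 : ∀ i, p i ≤ 1) (hy : ∀ i, y i ≤ N i) (hyx : ∑ i, c i * (y i : ℝ) ≤ x) :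
    ∏ i, binomPMF (N i) (p i) (y i) ≤ binomLowerTail N p c x := by
  have h := single_le_sum (f := fun y : (i : ι) → Fin (N i + 1) =>
      (∏ i, binomPMF (N i) (p i) (y i)) *
        (if ∑ i, c i * ((y i : ℕ) : ℝ) ≤ x then (1 : ℝ) else 0))
    (fun y _ => mul_nonneg (prod_nonneg fun i _ => binomPMF_nonneg (hp0 i) (hp1 i) _)
      (by split_ifs <;> norm_num))
    (mem_univ fun i => ⟨y i, Nat.lt_succ_of_le (hy i)⟩)
  simpa only [binomLowerTail, hyx, if_true, mul_one] using h

variable {κ : Type*} {l : Filter κ} {L x : κ → ℝ} {N : κ → ι → ℕ} {p : κ → ι → ℝ} {w c : ι → ℝ}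

lemma eventually_binomLowerTail_le_exp {t ε : ℝ} (hL : Tendsto L l atTop)
    (hx : Tendsto (fun n => x n / L n) l (𝓝 0))
    (hp0 : ∀ i, ∀ᶠ n in l, 0 < p n i) (hp : ∀ i, Tendsto (fun n => p n i) l (𝓝 0))
    (hNp : ∀ i, Tendsto (fun n => N n i * p n i / L n) l (𝓝 (w i))) (ht : 0 ≤ t) (hε : 0 < ε) :
    ∀ᶠ n in l, binomLowerTail (N n) (p n) c (x n) ≤
      Real.exp (-((poissonExponent w c t - ε) * L n)) := by
  have hexponent : Tendsto
      (fun n => t * (x n / L n) - ∑ i, N n i * p n i / L n * (1 - Real.exp (-(c i * t)))) l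
      (𝓝 (-poissonExponent w c t)) := by
    simpa [poissonExponent] using
      (hx.const_mul t).sub (tendsto_finsetSum univ fun i _ => (hNp i).mul_const _)
  filter_upwards [hL.eventually_gt_atTop 0, eventually_all.2 hp0,
    eventually_all.2 fun i => (hp i).eventually_lt_const one_pos,
    hexponent.eventually_lt_const (show _ < -(poissonExponent w c t - ε) by linarith)]
    with n hLn hp0n hp1n hlt
  refine (binomLowerTail_le_exp (fun i => (hp0n i).le) (fun i => (hp1n i).le) c (x n) ht).trans
    (Real.exp_le_exp.2 ?_)
  have hscale : t * x n - poissonExponent (fun i => N n i * p n i) c t =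
      (t * (x n / L n) - ∑ i, N n i * p n i / L n * (1 - Real.exp (-(c i * t)))) * L n := by
    rw [poissonExponent, sub_mul, sum_mul, mul_assoc, div_mul_cancel₀ _ hLn.ne']
    congr 1
    exact sum_congr rfl fun i _ => by field_simp
  rw [hscale, ← neg_mul]
  exact mul_le_mul_of_nonneg_right hlt.le hLn.le

lemma eventually_exp_le_binomLowerTail {t ε : ℝ} (hL : Tendsto L l atTop)
    (hx : Tendsto (fun n => x n / L n) l (𝓝 0)) (hw : ∀ i, 0 < w i)
    (hp0 : ∀ i, ∀ᶠ n in l, 0 < p n i) (hp : ∀ i, Tendsto (fun n => p n i) l (𝓝 0))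
    (hNp : ∀ i, Tendsto (fun n => N n i * p n i / L n) l (𝓝 (w i)))
    {i₀ : ι} (hc₀ : c i₀ < 0) (hcrit : ∑ i, w i * c i * Real.exp (-(c i * t)) = 0) (hε : 0 < ε) :
    ∀ᶠ n in l, Real.exp (-((poissonExponent w c t + ε) * L n)) ≤
      binomLowerTail (N n) (p n) c (x n) := by
  have hθ (i : ι) : 0 < w i * Real.exp (-(c i * t)) := mul_pos (hw i) (Real.exp_pos _)
  have hcθ : ∑ i, c i * (w i * Real.exp (-(c i * t))) = 0 := by
    rw [← hcrit]
    exact sum_congr rfl fun i _ => by ring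
  obtain ⟨y, hyL, hyx⟩ := exists_nat_tendsto_div_of_sum_le_zero hL hx hθ hcθ.le hc₀
  have hcard : (0 : ℝ) < Fintype.card ι := Nat.cast_pos.2 (Fintype.card_pos_iff.2 ⟨i₀⟩)
  have hpoint := eventually_all.2 fun i =>
    eventually_exp_le_binomPMF hL (hw i) (hθ i) (div_pos hε hcard) (hp0 i) (hp i) (hNp i) (hyL i)
  filter_upwards [hpoint, hyx, eventually_all.2 hp0,
    eventually_all.2 fun i => (hp i).eventually_lt_const one_pos] with n hpn hyxn hp0n hp1n
  calc Real.exp (-((poissonExponent w c t + ε) * L n))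
      = ∏ i, Real.exp
          (-((poissonRate (w i) (w i * Real.exp (-(c i * t))) + ε / Fintype.card ι) * L n)) := by
        rw [← Real.exp_sum, sum_neg_distrib, ← sum_mul, sum_add_distrib,
          sum_poissonRate_tilt fun i => (hw i).ne', hcrit, sum_const, card_univ, nsmul_eq_mul,
          mul_div_cancel₀ _ hcard.ne', mul_zero, sub_zero]
    _ ≤ ∏ i, binomPMF (N n i) (p n i) (y n i) :=
        prod_le_prod (fun i _ => (Real.exp_pos _).le) fun i _ => (hpn i).2
    _ ≤ binomLowerTail (N n) (p n) c (x n) :=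
        prod_binomPMF_le_binomLowerTail (fun i => (hp0n i).le) (fun i => (hp1n i).le)
          (fun i => (hpn i).1) hyxn

theorem exists_binomLowerTail_eq_exp_sSup_poissonExponent (hL : Tendsto L l atTop)
    (hx : Tendsto (fun n => x n / L n) l (𝓝 0)) (hw : ∀ i, 0 < w i)
    (hp0 : ∀ i, ∀ᶠ n in l, 0 < p n i) (hp : ∀ i, Tendsto (fun n => p n i) l (𝓝 0))
    (hNp : ∀ i, Tendsto (fun n => N n i * p n i / L n) l (𝓝 (w i)))
    {i₀ : ι} (hc₀ : c i₀ < 0) (hmean : 0 < ∑ i, w i * c i) :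
    ∃ ε : κ → ℝ, Tendsto ε l (𝓝 0) ∧ ∀ᶠ n in l, binomLowerTail (N n) (p n) c (x n) =
      Real.exp (-((1 + ε n) * (sSup (poissonExponent w c '' Set.Ici 0) * L n))) := by
  obtain ⟨t, ht, hpos, hcrit, hmax⟩ := exists_isMaxOn_Ici_of_deriv_pos (a := 0)
    (fun t _ => hasDerivAt_poissonExponent w c t) (by simpa using hmean)
    (tendsto_poissonExponent_atBot (fun i => (hw i).le) (hw i₀) hc₀)
  have hsup : sSup (poissonExponent w c '' Set.Ici 0) = poissonExponent w c t :=
    IsGreatest.csSup_eq ⟨Set.mem_image_of_mem _ ht.le, Set.forall_mem_image.2 fun _ hs => hmax hs⟩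
  have hexponent : poissonExponent w c t ≠ 0 := by
    simpa [poissonExponent] using hpos.ne'
  rw [hsup]
  exact exists_tendsto_zero_eq_exp_neg hexponent (hL.eventually_gt_atTop 0)
    (fun _ hε => eventually_exp_le_binomLowerTail hL hx hw hp0 hp hNp hc₀ hcrit hε)
    (fun _ hε => eventually_binomLowerTail_le_exp hL hx hp0 hp hNp ht.le hε)

end LowerTail

section Specialization

variable {k : ℕ} {α β : ℝ}

/-- Half of the coefficient `c_r = 2 (k - 1 - 2r)` of `Y_r` in `X`. The subtraction is real. -/
noncomputable def halfCoeff (k : ℕ) (r : Fin k) : ℝ :=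
  (k : ℝ) - 1 - 2 * ((r : ℕ) : ℝ)

/-- The limit of the normalised mean `E[Y_r] / log n`. -/
noncomputable def limitMean (k : ℕ) (α β : ℝ) (r : Fin k) : ℝ :=
  1 / 2 ^ (k - 1) * (((k - 1).choose (r : ℕ) : ℝ) * if (r : ℕ) = 0 then α else β)

lemma halfCoeff_last_neg (hk : 2 ≤ k) : halfCoeff k ⟨k - 1, by omega⟩ < 0 := by
  have hk1 : (1 : ℝ) < k := Nat.one_lt_cast.2 hk
  rw [halfCoeff, Nat.cast_pred (by omega)]
  linarith

lemma limitMean_pos (hα : 0 < α) (hβ : 0 < β) (r : Fin k) : 0 < limitMean k α β r := by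
  have hchoose : (0 : ℝ) < (k - 1).choose (r : ℕ) :=
    Nat.cast_pos.2 (Nat.choose_pos (Nat.le_sub_one_of_lt r.isLt))
  unfold limitMean
  split_ifs <;> positivity

lemma sum_limitMean_mul (hk : 0 < k) (α β : ℝ) (f : ℕ → ℝ) :
    ∑ r : Fin k, limitMean k α β r * f r =
      1 / 2 ^ (k - 1) * (α * f 0 + β * ∑ a ∈ Icc 1 (k - 1), ((k - 1).choose a : ℝ) * f a) := by
  obtain ⟨m, rfl⟩ := Nat.exists_eq_add_one_of_ne_zero hk.ne'
  have htail (r : Fin m) : limitMean (m + 1) α β r.succ * f r.succ =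
      1 / 2 ^ m * (β * ((m.choose (r + 1) : ℝ) * f (r + 1))) := by
    simp only [limitMean, Fin.val_succ, Nat.add_sub_cancel, Nat.add_one_ne_zero, if_false]
    ring
  rw [Fin.sum_univ_succ, sum_congr rfl fun r _ => htail r, ← mul_sum, ← mul_sum,
    Fin.sum_univ_eq_sum_range (fun r => (m.choose (r + 1) : ℝ) * f (r + 1)), range_eq_Ico,
    sum_Ico_add' (fun a => (m.choose a : ℝ) * f a), zero_add, Ico_add_one_right_eq_Icc]
  simp only [limitMean, Fin.val_zero, Nat.add_sub_cancel, Nat.choose_zero_right, Nat.cast_one,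
    if_true]
  ring

lemma sum_range_choose_mul_sub_two_mul (m : ℕ) :
    ∑ r ∈ range (m + 1), (m.choose r : ℝ) * ((m : ℝ) - 2 * r) = 0 := by
  have hchoose : ∑ r ∈ range (m + 1), (m.choose r : ℝ) = 2 ^ m := mod_cast Nat.sum_range_choose m
  have hmul : ∑ r ∈ range (m + 1), (r * m.choose r : ℝ) = m * 2 ^ (m - 1) :=
    mod_cast Nat.sum_range_mul_choose m
  calc ∑ r ∈ range (m + 1), (m.choose r : ℝ) * ((m : ℝ) - 2 * r)
      = m * ∑ r ∈ range (m + 1), (m.choose r : ℝ) -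
          2 * ∑ r ∈ range (m + 1), (r * m.choose r : ℝ) := by
        rw [mul_sum, mul_sum, ← sum_sub_distrib]
        exact sum_congr rfl fun r _ => by ring
    _ = 0 := by
        rw [hchoose, hmul]
        cases m with
        | zero => simp
        | succ m =>
          rw [Nat.add_sub_cancel]
          ring

lemma sum_limitMean_mul_halfCoeff (hk : 0 < k) (α β : ℝ) :
    ∑ r, limitMean k α β r * halfCoeff k r = 1 / 2 ^ (k - 1) * ((α - β) * ((k : ℝ) - 1)) := by
  have hsum := sum_limitMean_mul hk α β fun a => (k : ℝ) - 1 - 2 * (a : ℝ)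
  have hzero := sum_range_choose_mul_sub_two_mul (k - 1)
  rw [range_eq_Ico, sum_eq_sum_Ico_succ_bot (Nat.succ_pos _), zero_add,
    Nat.succ_eq_add_one, Ico_add_one_right_eq_Icc, Nat.choose_zero_right, Nat.cast_one,
    Nat.cast_pred hk] at hzero
  simp only [halfCoeff]
  linear_combination hsum + (1 / 2 ^ (k - 1)) * β * hzero

lemma poissonExponent_limitMean_halfCoeff (hk : 0 < k) (α β t : ℝ) :
    poissonExponent (limitMean k α β) (halfCoeff k) t =
      1 / 2 ^ (k - 1) * (α * (1 - Real.exp (-(((k : ℝ) - 1) * t))) +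
        β * ∑ a ∈ Icc 1 (k - 1), ((k - 1).choose a : ℝ) *
          (1 - Real.exp (-(((k : ℝ) - 1 - 2 * (a : ℝ)) * t)))) := by
  have h := sum_limitMean_mul hk α β fun a => 1 - Real.exp (-(((k : ℝ) - 1 - 2 * (a : ℝ)) * t))
  rwa [Nat.cast_zero, mul_zero, sub_zero] at h

lemma tendsto_log_div_choose {m : ℕ} (hm : m ≠ 0) :
    Tendsto (fun n : ℕ => Real.log n / (n.choose m : ℝ)) atTop (𝓝 0) := by
  have hlog : (fun n : ℕ => Real.log n) =o[atTop] fun n : ℕ => (n : ℝ) ^ m := by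
    simpa [Function.comp_def] using
      (isLittleO_log_rpow_atTop (r := m) (by positivity)).comp_tendsto tendsto_natCast_atTop_atTop
  exact (hlog.trans_isTheta (isTheta_choose m).symm).tendsto_div_nhds_zero

lemma tendsto_neg_div_log_div_self {κ : Type*} {l : Filter κ} {L : κ → ℝ}
    (hL : Tendsto L l atTop) :
    Tendsto (fun n => -(L n / Real.log (L n)) / L n) l (𝓝 0) := by
  have h := (tendsto_inv_atTop_zero.comp (Real.tendsto_log_atTop.comp hL)).neg
  rw [neg_zero] at h
  refine h.congr' ?_
  filter_upwards [hL.eventually_ne_atTop 0] with n hn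
  rw [Function.comp, Function.comp, neg_div, div_right_comm, div_self hn, one_div]

lemma eventually_pos_of_isEquivalent_log_div_choose {m : ℕ} {γ : ℝ} {q : ℕ → ℝ} (hγ : 0 < γ)
    (hq : q ~[atTop] fun n : ℕ => γ * Real.log n / (n.choose m : ℝ)) : ∀ᶠ n in atTop, 0 < q n := by
  obtain ⟨φ, hφ, hqφ⟩ := hq.exists_eq_mul
  filter_upwards [hqφ, hφ.eventually_const_lt one_pos, eventually_gt_atTop 1,
    eventually_ge_atTop m] with n hqn hφn hn1 hnm
  have hlog : 0 < Real.log n := Real.log_pos (Nat.one_lt_cast.2 hn1)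
  have hchoose : (0 : ℝ) < n.choose m := Nat.cast_pos.2 (Nat.choose_pos hnm)
  rw [hqn]
  exact mul_pos hφn (by positivity)

lemma tendsto_mul_div_log_limitMean {N : ℕ → ℕ} {p : ℕ → ℝ} {r : Fin k}
    (hN : (fun n => (N n : ℝ)) ~[atTop] fun n : ℕ =>
      1 / 2 ^ (k - 1) * (((k - 1).choose (r : ℕ) : ℝ) * (n.choose (k - 1) : ℝ)))
    (hp : p ~[atTop] fun n : ℕ =>
      (if (r : ℕ) = 0 then α else β) * Real.log n / (n.choose (k - 1) : ℝ)) :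
    Tendsto (fun n => N n * p n / Real.log n) atTop (𝓝 (limitMean k α β r)) := by
  have h := (hN.mul hp).div (IsEquivalent.refl (u := fun n : ℕ => Real.log n))
  refine h.symm.tendsto_nhds (tendsto_const_nhds.congr' ?_)
  filter_upwards [eventually_gt_atTop 1, eventually_ge_atTop (k - 1)] with n hn1 hnk
  have hlog : 0 < Real.log n := Real.log_pos (Nat.one_lt_cast.2 hn1)
  have hchoose : (0 : ℝ) < n.choose (k - 1) := Nat.cast_pos.2 (Nat.choose_pos hnk)
  simp only [limitMean, Pi.mul_apply, Pi.div_apply]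
  field_simp

end Specialization

/-- For `X = ∑_{r=0}^{k-1} 2(k-1-2r) Y_r` with independent binomials
`Y_r ∼ Bin((1+o(1)) 2^{-(k-1)} C(k-1,r) C(n,k-1), p_r)` with `p_0 ≈ α log n / C(n,k-1)` and
`p_r ≈ β log n / C(n,k-1)` for `r ≥ 1`:
`Pr(X ≤ -2 log n / log log n) = exp(-(1+o(1)) I₂(α,β) log n)`. -/
theorem trunc_tail_bound (k : ℕ) (hk : 2 ≤ k) (α β : ℝ) (hβ : 0 < β) (hαβ : β < α)
    (N : ℕ → Fin k → ℕ) (p : ℕ → Fin k → ℝ)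
    (hN : ∃ eN : ℕ → Fin k → ℝ, (∀ r, Tendsto (fun n => eN n r) atTop (nhds 0)) ∧
      ∀ n r, ((N n r : ℕ) : ℝ)
        = (1 + eN n r) * ((1 / 2 ^ (k - 1)) * (((k - 1).choose (r : ℕ) : ℝ) *
            (n.choose (k - 1) : ℝ))))
    (hp : ∃ ep : ℕ → Fin k → ℝ, (∀ r, Tendsto (fun n => ep n r) atTop (nhds 0)) ∧
      ∀ n r, p n r = (1 + ep n r) *
        ((if (r : ℕ) = 0 then α else β) * Real.log n / (n.choose (k - 1) : ℝ))) :
    ∃ ε : ℕ → ℝ, Tendsto ε atTop (nhds 0) ∧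
      ∀ᶠ n : ℕ in atTop,
        (∑ y : (r : Fin k) → Fin (N n r + 1),
            (∏ r, binomPMF (N n r) (p n r) (y r)) *
              (if (∑ r : Fin k, 2 * ((k : ℝ) - 1 - 2 * ((r : ℕ) : ℝ)) * ((y r : ℕ) : ℝ))
                  ≤ -(2 * Real.log n / Real.log (Real.log n)) then 1 else 0))
          = Real.exp (-((1 + ε n) *
              (sSup {z : ℝ | ∃ t : ℝ, 0 ≤ t ∧
                  z = (1 / 2 ^ (k - 1)) * (α * (1 - Real.exp (-(((k : ℝ) - 1) * t))) +
                    β * ∑ a ∈ Finset.Icc 1 (k - 1),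
                      ((k - 1).choose a : ℝ) *
                        (1 - Real.exp (-(((k : ℝ) - 1 - 2 * (a : ℝ)) * t))))} *
                Real.log n))) := by
  obtain ⟨eN, heN, hN⟩ := hN
  obtain ⟨ep, hep, hp⟩ := hp
  have hNr (r) := isEquivalent_of_eq_one_add_mul (heN r) fun n => hN n r
  have hpr (r) := isEquivalent_of_eq_one_add_mul (hep r) fun n => hp n r
  have hL : Tendsto (fun n : ℕ => Real.log n) atTop atTop :=
    Real.tendsto_log_atTop.comp tendsto_natCast_atTop_atTop
  have hp0 (r) : Tendsto (fun n => p n r) atTop (𝓝 0) := (hpr r).symm.tendsto_nhds <| by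
    simpa only [mul_div_assoc, mul_zero] using
      (tendsto_log_div_choose (m := k - 1) (by omega)).const_mul _
  have hmean : 0 < ∑ r, limitMean k α β r * halfCoeff k r := by
    rw [sum_limitMean_mul_halfCoeff (by omega)]
    exact mul_pos (by positivity) (mul_pos (sub_pos.2 hαβ) (sub_pos.2 (Nat.one_lt_cast.2 hk)))
  obtain ⟨ε, hε, htail⟩ := exists_binomLowerTail_eq_exp_sSup_poissonExponent hL
    (tendsto_neg_div_log_div_self hL) (limitMean_pos (hβ.trans hαβ) hβ)
    (fun r => eventually_pos_of_isEquivalent_log_div_choose (by split_ifs <;> linarith) (hpr r))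
    hp0 (fun r => tendsto_mul_div_log_limitMean (hNr r) (hpr r)) (halfCoeff_last_neg hk) hmean
  refine ⟨ε, hε, htail.mono fun n hn => ?_⟩
  rw [← binomLowerTail_const_mul _ _ _ _ two_pos, mul_neg, ← mul_div_assoc] at hn
  simp only [Set.image, Set.mem_Ici, poissonExponent_limitMean_halfCoeff (show 0 < k by omega),
    eq_comm] at hn
  exact hn.symm
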